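/- Let E be a real separable Banach space, T > 0, L ≥ 0 and x ∈ E. Let S : [0,T] → L(E) satisfy S(0) = Id, ‖S(t)‖ ≤ 1 for every t ∈ [0,T], and t ↦ S(t)v continuous on [0,T] for every v ∈ E. Let Φ : [0,T] × E → E be such that t ↦ Φ(t,v) is strongly (Borel) measurable for every v ∈ E, ‖Φ(t,a) − Φ(t,b)‖ ≤ L‖a−b‖ for all t ∈ [0,T] and a, b ∈ E, and ∫₀^T ‖Φ(t,y₀)‖² dt < ∞ for some y₀ ∈ E. Let w : [0,T] → E be continuous. Then there exists exactly one continuous function y : [0,T] → E such that, for every t ∈ [0,T], the map s ↦ S(t−s)(Φ(s,y(s))) is Bochner integrable on [0,t] and y(t) = S(t)x + ∫₀^t S(t−s)(Φ(s,y(s))) ds + w(t). -/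

import Mathlib

/-!
STATEMENT 13: deterministic (pathwise) existence and uniqueness of mild solutions.
`E` is a real separable Banach space, `T > 0`, `L ≥ 0`, `x ∈ E`; `S : [0,T] → L(E)`
satisfies `S 0 = Id`, `‖S t‖ ≤ 1` and is strongly continuous; `Φ : [0,T] × E → E` is
strongly measurable in `t` for each fixed `v`, uniformly `L`-Lipschitz in the second
variable, and `∫₀^T ‖Φ(t,y₀)‖² dt < ∞` for some `y₀`; `w : [0,T] → E` is continuous.
Then there exists exactly one continuous `y : [0,T] → E` such that for every
`t ∈ [0,T]` the map `s ↦ S(t−s)(Φ(s,y(s)))` is Bochner integrable on `[0,t]` and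
`y t = S t x + ∫₀^t S(t−s)(Φ(s,y(s))) ds + w t`.
-/

open MeasureTheory

noncomputable section

/-!
A mild solution is a fixed point of `y ↦ b + S ∗ Φ(·, y)` with `b t = S t x + w t`. The operators
`S t` are uniformly bounded on `[0, T]` by Banach–Steinhaus, and convolution with `S` maps
integrable functions to continuous ones, so this map acts on continuous paths and is Lipschitz in
the Volterra sense: the distance of the images at time `t` is at most `C ∫₀ᵗ dist (y s) (z s) ds`.
Its `n`-th iterate is therefore Lipschitz for the supremum distance with constant `(C T) ^ n / n!`,
which is eventually smaller than one.
-/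

open Set Filter Topology
open scoped NNReal

section Volterra

variable {X : Type*} [MetricSpace X] {C : ℝ≥0} {a b : ℝ} {K : (ℝ → X) → ℝ → X}

/-- `K` is a Volterra-type Lipschitz operator on the continuous paths over `[a, b]`: the images of
two paths at time `t` differ by at most `C` times the integrated distance of the paths up to `t`.
Paths are encoded as functions on `ℝ` of which only the values on `[a, b]` matter. -/
structure IsVolterraLipschitz (C : ℝ≥0) (a b : ℝ) (K : (ℝ → X) → ℝ → X) : Prop where
  continuousOn : ∀ {y}, ContinuousOn y (Icc a b) → ContinuousOn (K y) (Icc a b)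
  dist_le : ∀ {y z}, ContinuousOn y (Icc a b) → ContinuousOn z (Icc a b) →
    ∀ t ∈ Icc a b, dist (K y t) (K z t) ≤ C * ∫ s in a..t, dist (y s) (z s)

namespace IsVolterraLipschitz

theorem eqOn (hK : IsVolterraLipschitz C a b K) {y z : ℝ → X} (hy : ContinuousOn y (Icc a b))
    (hz : ContinuousOn z (Icc a b)) (hyz : EqOn y z (Icc a b)) : EqOn (K y) (K z) (Icc a b) := by
  intro t ht
  have hzero : ∫ s in a..t, dist (y s) (z s) = 0 := by
    refine intervalIntegral.integral_zero_ae (ae_of_all _ fun s hs => ?_)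
    rw [uIoc_of_le ht.1] at hs
    rw [hyz ⟨hs.1.le, hs.2.trans ht.2⟩, dist_self]
  simpa only [hzero, mul_zero, dist_le_zero] using hK.dist_le hy hz t ht

/-- The operator induced on the space `C([a, b], X)`, on which the Banach fixed-point theorem is
applied; a path is first extended to `ℝ` by its end values. -/
def onIcc (hK : IsVolterraLipschitz C a b K) (hab : a ≤ b) (y : C(Icc a b, X)) :
    C(Icc a b, X) where
  toFun t := K (IccExtend hab y) t
  continuous_toFun := (hK.continuousOn y.continuous.Icc_extend'.continuousOn).domRestrict

theorem dist_iterate_onIcc_apply_le (hK : IsVolterraLipschitz C a b K) (hab : a ≤ b) (n : ℕ)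
    (y z : C(Icc a b, X)) (t : Icc a b) :
    dist ((hK.onIcc hab)^[n] y t) ((hK.onIcc hab)^[n] z t) ≤
      (C * (t - a)) ^ n / n.factorial * dist y z := by
  induction n generalizing t with
  | zero => simpa using ContinuousMap.dist_apply_le_dist t
  | succ n ih =>
    rw [Function.iterate_succ_apply', Function.iterate_succ_apply']
    set p := (hK.onIcc hab)^[n] y
    set q := (hK.onIcc hab)^[n] z
    have hp : Continuous (IccExtend hab p) := p.continuous.Icc_extend'
    have hq : Continuous (IccExtend hab q) := q.continuous.Icc_extend'
    calc dist (hK.onIcc hab p t) (hK.onIcc hab q t)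
        ≤ C * ∫ s in a..t, dist (IccExtend hab p s) (IccExtend hab q s) :=
          hK.dist_le hp.continuousOn hq.continuousOn t t.2
      _ ≤ C * ∫ s in a..t, (C * (s - a)) ^ n / n.factorial * dist y z := by
          gcongr
          refine intervalIntegral.integral_mono_on t.2.1 ((hp.dist hq).intervalIntegrable _ _)
            (Continuous.intervalIntegrable (by fun_prop) _ _) fun s hs => ?_
          have hsab : s ∈ Icc a b := ⟨hs.1, hs.2.trans t.2.2⟩
          simpa only [IccExtend_of_mem hab _ hsab] using ih ⟨s, hsab⟩
      _ = (C * (t - a)) ^ (n + 1) / (n + 1).factorial * dist y z := by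
          simp only [mul_pow, intervalIntegral.integral_mul_const,
            intervalIntegral.integral_div, intervalIntegral.integral_const_mul,
            intervalIntegral.integral_comp_sub_right (fun s => s ^ n), integral_pow,
            sub_self, zero_pow n.succ_ne_zero, sub_zero, Nat.factorial_succ]
          push_cast
          field_simp
          ring

theorem exists_contractingWith_iterate_onIcc (hK : IsVolterraLipschitz C a b K) (hab : a ≤ b) :
    ∃ n : ℕ, ∃ c : ℝ≥0, ContractingWith c (hK.onIcc hab)^[n] := by
  obtain ⟨n, hn⟩ := ((FloorSemiring.tendsto_pow_div_factorial_atTop (C * (b - a))).eventually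
    (gt_mem_nhds zero_lt_one)).exists
  have : 0 ≤ b - a := sub_nonneg.2 hab
  refine ⟨n, .mk ((C * (b - a)) ^ n / n.factorial) (by positivity), hn,
    LipschitzWith.of_dist_le_mul fun y z => ?_⟩
  refine (ContinuousMap.dist_le (by positivity)).2 fun t => ?_
  have hta : 0 ≤ (t : ℝ) - a := sub_nonneg.2 t.2.1
  refine (hK.dist_iterate_onIcc_apply_le hab n y z t).trans ?_
  rw [NNReal.coe_mk]
  gcongr
  exact t.2.2

theorem existsUnique_isFixedPt_onIcc [CompleteSpace X] [Nonempty X]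
    (hK : IsVolterraLipschitz C a b K) (hab : a ≤ b) :
    ∃! y, Function.IsFixedPt (hK.onIcc hab) y := by
  obtain ⟨n, c, hc⟩ := hK.exists_contractingWith_iterate_onIcc hab
  obtain ⟨x₀⟩ := ‹Nonempty X›
  have : Nonempty C(Icc a b, X) := ⟨.const _ x₀⟩
  exact ⟨_, hc.isFixedPt_fixedPoint_iterate, fun z hz => hc.fixedPoint_unique (hz.iterate n)⟩

theorem exists_eqOn_self [CompleteSpace X] [Nonempty X] (hK : IsVolterraLipschitz C a b K)
    (hab : a ≤ b) :
    ∃ y, (ContinuousOn y (Icc a b) ∧ EqOn y (K y) (Icc a b)) ∧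
      ∀ z, ContinuousOn z (Icc a b) → EqOn z (K z) (Icc a b) → EqOn z y (Icc a b) := by
  obtain ⟨y, hy, hy_unique⟩ := hK.existsUnique_isFixedPt_onIcc hab
  refine ⟨IccExtend hab y, ⟨y.continuous.Icc_extend'.continuousOn, fun t ht => ?_⟩,
    fun z hz hKz => ?_⟩
  · rw [IccExtend_of_mem hab _ ht]
    exact (DFunLike.congr_fun hy ⟨t, ht⟩).symm
  · let z' : C(Icc a b, X) := ⟨(Icc a b).domRestrict z, hz.domRestrict⟩
    have hz'z : EqOn (IccExtend hab z') z (Icc a b) := fun t ht => IccExtend_of_mem hab _ ht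
    have hz' : Function.IsFixedPt (hK.onIcc hab) z' := ContinuousMap.ext fun t =>
      (hK.eqOn z'.continuous.Icc_extend'.continuousOn hz hz'z t.2).trans (hKz t.2).symm
    rw [← hy_unique z' hz']
    exact hz'z.symm

end IsVolterraLipschitz

end Volterra

section Superposition

variable {α : Type*} {mα : MeasurableSpace α} {μ : Measure α}

theorem aestronglyMeasurable_apply_simpleFunc {X Y : Type*} [TopologicalSpace Y]
    [TopologicalSpace.PseudoMetrizableSpace Y] {u : α → X → Y}
    (hu : ∀ x, AEStronglyMeasurable (fun a => u a x) μ) (f : SimpleFunc α X) :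
    AEStronglyMeasurable (fun a => u a (f a)) μ := by
  have hcover : ⋃ x : f.range, f ⁻¹' {(x : X)} = univ :=
    eq_univ_of_forall fun a => mem_iUnion.2 ⟨⟨f a, f.mem_range_self a⟩, rfl⟩
  rw [← Measure.restrict_univ (μ := μ), ← hcover, aestronglyMeasurable_iUnion_iff]
  intro x
  refine (hu x).restrict.congr ?_
  filter_upwards [ae_restrict_mem (f.measurableSet_fiber x)] with a ha
  rw [show f a = x from ha]

-- Approximating `f` by simple functions avoids the separability of `X` that joint measurability
-- of `u` would require.
theorem aestronglyMeasurable_apply_of_continuous {X Y : Type*} [TopologicalSpace X]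
    [TopologicalSpace Y] [TopologicalSpace.PseudoMetrizableSpace Y] {u : α → X → Y} {f : α → X}
    (hu : ∀ x, AEStronglyMeasurable (fun a => u a x) μ) (hu_cont : ∀ᵐ a ∂μ, Continuous (u a))
    (hf : AEStronglyMeasurable f μ) : AEStronglyMeasurable (fun a => u a (f a)) μ := by
  obtain ⟨g, hg, hfg⟩ := hf
  refine aestronglyMeasurable_of_tendsto_ae atTop
    (fun n => aestronglyMeasurable_apply_simpleFunc hu (hg.approx n)) ?_
  filter_upwards [hu_cont, hfg] with a ha hfga
  rw [hfga]
  exact (ha.tendsto _).comp (hg.tendsto_approx a)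

theorem integrable_apply_of_lipschitzWith {E F : Type*} [NormedAddCommGroup E]
    [NormedAddCommGroup F] [IsFiniteMeasure μ] {L : ℝ≥0} {Φ : α → E → F} {y : α → E} {y₀ : E}
    (hΦ : ∀ v, AEStronglyMeasurable (fun a => Φ a v) μ) (hL : ∀ᵐ a ∂μ, LipschitzWith L (Φ a))
    (hy₀ : Integrable (fun a => Φ a y₀) μ) (hy : Integrable y μ) :
    Integrable (fun a => Φ a (y a)) μ := by
  have hmeas := aestronglyMeasurable_apply_of_continuous hΦ
    (hL.mono fun _ h => h.continuous) hy.aestronglyMeasurable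
  refine (hy₀.norm.add ((hy.sub (integrable_const y₀)).norm.const_mul (L : ℝ))).mono' hmeas ?_
  filter_upwards [hL] with a ha
  calc ‖Φ a (y a)‖ ≤ ‖Φ a y₀‖ + ‖Φ a (y a) - Φ a y₀‖ := norm_le_insert' _ _
    _ ≤ ‖Φ a y₀‖ + L * ‖y a - y₀‖ := by gcongr; exact ha.norm_sub_le _ _

theorem integrable_of_lintegral_norm_sq_lt_top {E : Type*} [NormedAddCommGroup E]
    [IsFiniteMeasure μ] {f : α → E} (hf : AEStronglyMeasurable f μ)
    (hf_sq : ∫⁻ a, ENNReal.ofReal (‖f a‖ ^ 2) ∂μ < ⊤) : Integrable f μ := by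
  have hsq : Integrable (fun a => ‖f a‖ ^ 2) μ :=
    ⟨hf.norm.pow 2, (hasFiniteIntegral_iff_ofReal (ae_of_all _ fun _ => by positivity)).2 hf_sq⟩
  exact ((memLp_two_iff_integrable_sq_norm hf).2 hsq).integrable one_le_two

end Superposition

theorem exists_norm_le_of_continuousOn_apply {X 𝕜 E F : Type*} [TopologicalSpace X]
    [NontriviallyNormedField 𝕜] [NormedAddCommGroup E] [NormedSpace 𝕜 E]
    [NormedAddCommGroup F] [NormedSpace 𝕜 F] [CompleteSpace F] {K : Set X} (hK : IsCompact K)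
    {S : X → F →L[𝕜] E} (hS : ∀ v, ContinuousOn (fun t => S t v) K) :
    ∃ M : ℝ≥0, ∀ t ∈ K, ‖S t‖ ≤ M := by
  obtain ⟨M, hM⟩ := banach_steinhaus (g := fun t : K => S t) fun v => by
    obtain ⟨B, hB⟩ := hK.exists_bound_of_continuousOn (hS v)
    exact ⟨B, fun t => hB t t.2⟩
  exact ⟨M.toNNReal, fun t ht => (hM ⟨t, ht⟩).trans (Real.le_coe_toNNReal M)⟩

theorem continuousWithinAt_indicator_Icc {E : Type*} [TopologicalSpace E] [Zero E]
    {a b s t₀ : ℝ} {k : ℝ → ℝ → E}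
    (hk : ∀ s ∈ Icc a b, ContinuousOn (fun t => k t s) (Icc s b)) (ht₀ : t₀ ∈ Icc a b)
    (hs : s ≠ t₀) :
    ContinuousWithinAt (fun t => (Icc a t).indicator (k t) s) (Icc a b) t₀ := by
  rcases lt_or_ge s a with hsa | has
  · simpa only [indicator, mem_Icc, hsa.not_ge, false_and, if_false] using
      continuousWithinAt_const
  rcases hs.lt_or_gt with hst | hts
  · have hnear : ∀ᶠ t in 𝓝[Icc a b] t₀, s < t := nhdsWithin_le_nhds (Ioi_mem_nhds hst)
    have hcont : ContinuousWithinAt (fun t => k t s) (Icc a b) t₀ :=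
      (hk s ⟨has, hst.le.trans ht₀.2⟩ t₀ ⟨hst.le, ht₀.2⟩).mono_of_mem_nhdsWithin <| by
        filter_upwards [hnear, self_mem_nhdsWithin] with t hst ht using ⟨hst.le, ht.2⟩
    refine hcont.congr_of_eventuallyEq ?_ (indicator_of_mem (mem_Icc.2 ⟨has, hst.le⟩) _)
    filter_upwards [hnear] with t hst using indicator_of_mem (mem_Icc.2 ⟨has, hst.le⟩) _
  · refine (continuousWithinAt_const (b := (0 : E))).congr_of_eventuallyEq ?_
      (indicator_of_notMem (fun h => hts.not_ge h.2) _)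
    filter_upwards [nhdsWithin_le_nhds (Iio_mem_nhds hts)] with t hts using
      indicator_of_notMem (fun h => hts.not_ge h.2) _

theorem continuousOn_setIntegral_Icc_of_dominated {E : Type*} [NormedAddCommGroup E]
    [NormedSpace ℝ E] {μ : Measure ℝ} [NullSingletonClass μ] {a b : ℝ} {k : ℝ → ℝ → E} {g : ℝ → ℝ}
    (hk_meas : ∀ t ∈ Icc a b, AEStronglyMeasurable (k t) (μ.restrict (Icc a t)))
    (hk_le : ∀ t ∈ Icc a b, ∀ s ∈ Icc a t, ‖k t s‖ ≤ g s) (hg : IntegrableOn g (Icc a b) μ)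
    (hk_cont : ∀ s ∈ Icc a b, ContinuousOn (fun t => k t s) (Icc s b)) :
    ContinuousOn (fun t => ∫ s in Icc a t, k t s ∂μ) (Icc a b) := by
  simp_rw [← integral_indicator measurableSet_Icc]
  intro t₀ ht₀
  refine continuousWithinAt_of_dominated (bound := (Icc a b).indicator g) ?_ ?_
    (hg.integrable_indicator measurableSet_Icc) ?_
  · filter_upwards [self_mem_nhdsWithin] with t ht
    exact (aestronglyMeasurable_indicator_iff measurableSet_Icc).2 (hk_meas t ht)
  · filter_upwards [self_mem_nhdsWithin] with t ht
    refine ae_of_all _ fun s => ?_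
    by_cases hs : s ∈ Icc a t
    · rw [indicator_of_mem hs, indicator_of_mem (Icc_subset_Icc_right ht.2 hs)]
      exact hk_le t ht s hs
    · rw [indicator_of_notMem hs, norm_zero]
      exact indicator_nonneg
        (fun r hr => (norm_nonneg _).trans (hk_le b ⟨ht.1.trans ht.2, le_rfl⟩ r hr)) s
  · filter_upwards [Measure.ae_ne μ t₀] with s hs
    exact continuousWithinAt_indicator_Icc hk_cont ht₀ hs

section Convolution

variable {E F : Type*} [NormedAddCommGroup E] [NormedSpace ℝ E] [NormedAddCommGroup F]
  [NormedSpace ℝ F] {S : ℝ → F →L[ℝ] E} {T t : ℝ} {M : ℝ≥0} {f g : ℝ → F}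

/-- The convolution `(S ∗ f) t = ∫₀ᵗ S (t - s) (f s) ds` of an operator-valued function with a
vector-valued one. -/
def operatorConvolution (S : ℝ → F →L[ℝ] E) (f : ℝ → F) (t : ℝ) : E :=
  ∫ s in Icc 0 t, S (t - s) (f s)

theorem aestronglyMeasurable_apply_sub (hS : ∀ v, ContinuousOn (fun t => S t v) (Icc 0 T))
    (ht : t ≤ T) (hf : AEStronglyMeasurable f (volume.restrict (Icc 0 t))) :
    AEStronglyMeasurable (fun s => S (t - s) (f s)) (volume.restrict (Icc 0 t)) := by
  refine aestronglyMeasurable_apply_of_continuous (u := fun s v => S (t - s) v) (fun v => ?_)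
    (ae_of_all _ fun s => (S (t - s)).continuous) hf
  refine ContinuousOn.aestronglyMeasurable ?_ measurableSet_Icc
  exact (hS v).comp (by fun_prop) fun s hs => ⟨sub_nonneg.2 hs.2, by linarith [hs.1]⟩

theorem norm_apply_sub_le (hM : ∀ t ∈ Icc 0 T, ‖S t‖ ≤ M) (ht : t ≤ T) {s : ℝ}
    (hs : s ∈ Icc 0 t) (v : F) : ‖S (t - s) v‖ ≤ M * ‖v‖ :=
  (S (t - s)).le_of_opNorm_le (hM _ ⟨sub_nonneg.2 hs.2, by linarith [hs.1]⟩) v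

theorem integrableOn_apply_sub (hS : ∀ v, ContinuousOn (fun t => S t v) (Icc 0 T))
    (hM : ∀ t ∈ Icc 0 T, ‖S t‖ ≤ M) (ht : t ≤ T) (hf : IntegrableOn f (Icc 0 t)) :
    IntegrableOn (fun s => S (t - s) (f s)) (Icc 0 t) := by
  refine (hf.norm.const_mul (M : ℝ)).mono'
    (aestronglyMeasurable_apply_sub hS ht hf.aestronglyMeasurable) ?_
  filter_upwards [ae_restrict_mem measurableSet_Icc] with s hs using norm_apply_sub_le hM ht hs _

theorem continuousOn_operatorConvolution (hS : ∀ v, ContinuousOn (fun t => S t v) (Icc 0 T))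
    (hM : ∀ t ∈ Icc 0 T, ‖S t‖ ≤ M) (hf : IntegrableOn f (Icc 0 T)) :
    ContinuousOn (operatorConvolution S f) (Icc 0 T) := by
  refine continuousOn_setIntegral_Icc_of_dominated (fun t ht => ?_)
    (fun t ht s hs => norm_apply_sub_le hM ht.2 hs _) (hf.norm.const_mul (M : ℝ)) fun s hs => ?_
  · exact aestronglyMeasurable_apply_sub hS ht.2
      (hf.mono_set (Icc_subset_Icc_right ht.2)).aestronglyMeasurable
  · exact (hS (f s)).comp (by fun_prop) fun t ht => ⟨sub_nonneg.2 ht.1, by linarith [hs.1, ht.2]⟩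

theorem norm_operatorConvolution_sub_le
    (hS : ∀ v, ContinuousOn (fun t => S t v) (Icc 0 T)) (hM : ∀ t ∈ Icc 0 T, ‖S t‖ ≤ M)
    (ht : t ≤ T) (hf : IntegrableOn f (Icc 0 t)) (hg : IntegrableOn g (Icc 0 t)) :
    ‖operatorConvolution S f t - operatorConvolution S g t‖ ≤
      M * ∫ s in Icc 0 t, ‖f s - g s‖ := by
  rw [operatorConvolution, operatorConvolution, ← integral_sub
    (integrableOn_apply_sub hS hM ht hf) (integrableOn_apply_sub hS hM ht hg),
    ← integral_const_mul]
  refine norm_integral_le_of_norm_le ((hf.sub hg).norm.const_mul (M : ℝ)) ?_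
  filter_upwards [ae_restrict_mem measurableSet_Icc] with s hs
  rw [← map_sub]
  exact norm_apply_sub_le hM ht hs _

end Convolution

section MildSolution

variable {E F : Type*} [NormedAddCommGroup E] [NormedSpace ℝ E] [NormedAddCommGroup F]
  [NormedSpace ℝ F] {S : ℝ → F →L[ℝ] E} {Φ : ℝ → E → F} {b : ℝ → E} {T : ℝ} {L M : ℝ≥0} {y₀ : E}

/-- `y` is a mild solution on `[0, T]` with nonlinearity `Φ` and forcing `b`: it is continuous and
`y = b + S ∗ Φ(·, y)`, the convolution integrand being integrable. For an evolution equation with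
initial value `x` and noise path `w`, the forcing is `b t = S t x + w t`. -/
def IsMildSolution (S : ℝ → F →L[ℝ] E) (Φ : ℝ → E → F) (b : ℝ → E) (T : ℝ) (y : ℝ → E) : Prop :=
  ContinuousOn y (Icc 0 T) ∧ ∀ t ∈ Icc 0 T,
    IntegrableOn (fun s => S (t - s) (Φ s (y s))) (Icc 0 t) ∧
      y t = b t + operatorConvolution S (fun s => Φ s (y s)) t

theorem isVolterraLipschitz_add_operatorConvolution
    (hS : ∀ v, ContinuousOn (fun t => S t v) (Icc 0 T)) (hM : ∀ t ∈ Icc 0 T, ‖S t‖ ≤ M)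
    (hΦL : ∀ᵐ t ∂volume.restrict (Icc 0 T), LipschitzWith L (Φ t))
    (hΦ : ∀ y, ContinuousOn y (Icc 0 T) → IntegrableOn (fun t => Φ t (y t)) (Icc 0 T))
    (hb : ContinuousOn b (Icc 0 T)) :
    IsVolterraLipschitz (M * L) 0 T
      fun y t => b t + operatorConvolution S (fun s => Φ s (y s)) t where
  continuousOn hy := hb.add (continuousOn_operatorConvolution hS hM (hΦ _ hy))
  dist_le {y z} hy hz t ht := by
    have hsub : Icc 0 t ⊆ Icc 0 T := Icc_subset_Icc_right ht.2
    have hdist : IntegrableOn (fun s => dist (y s) (z s)) (Icc 0 t) :=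
      (continuous_dist.comp_continuousOn (hy.prodMk hz)).mono hsub |>.integrableOn_Icc
    rw [dist_add_left, dist_eq_norm, intervalIntegral.integral_of_le ht.1,
      ← integral_Icc_eq_integral_Ioc, NNReal.coe_mul, mul_assoc, ← integral_const_mul]
    refine (norm_operatorConvolution_sub_le hS hM ht.2 ((hΦ y hy).mono_set hsub)
      ((hΦ z hz).mono_set hsub)).trans ?_
    gcongr ?_ * ?_
    refine integral_mono_ae (((hΦ y hy).mono_set hsub).sub ((hΦ z hz).mono_set hsub)).norm
      (hdist.const_mul _) ?_
    filter_upwards [ae_restrict_of_ae_restrict_of_subset hsub hΦL] with s hs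
    simpa only [dist_eq_norm] using hs.dist_le_mul (y s) (z s)

theorem stmt_13_general [CompleteSpace E] [CompleteSpace F] (hT : 0 ≤ T)
    (hS : ∀ v, ContinuousOn (fun t => S t v) (Icc 0 T))
    (hΦ : ∀ v, AEStronglyMeasurable (fun t => Φ t v) (volume.restrict (Icc 0 T)))
    (hΦL : ∀ᵐ t ∂volume.restrict (Icc 0 T), LipschitzWith L (Φ t))
    (hy₀ : IntegrableOn (fun t => Φ t y₀) (Icc 0 T)) (hb : ContinuousOn b (Icc 0 T)) :
    ∃ y, IsMildSolution S Φ b T y ∧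
      ∀ z, IsMildSolution S Φ b T z → EqOn z y (Icc 0 T) := by
  obtain ⟨M, hM⟩ := exists_norm_le_of_continuousOn_apply isCompact_Icc hS
  have hΦ_int : ∀ y, ContinuousOn y (Icc 0 T) → IntegrableOn (fun t => Φ t (y t)) (Icc 0 T) :=
    fun y hy => integrable_apply_of_lipschitzWith hΦ hΦL hy₀ hy.integrableOn_Icc
  obtain ⟨y, ⟨hy, hy_eq⟩, hy_unique⟩ :=
    (isVolterraLipschitz_add_operatorConvolution hS hM hΦL hΦ_int hb).exists_eqOn_self hT
  refine ⟨y, ⟨hy, fun t ht => ⟨?_, hy_eq ht⟩⟩, fun z hz => hy_unique z hz.1 fun t ht =>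
    (hz.2 t ht).2⟩
  exact integrableOn_apply_sub hS hM ht.2 ((hΦ_int y hy).mono_set (Icc_subset_Icc_right ht.2))

end MildSolution

theorem stmt_13
    {E : Type*} [NormedAddCommGroup E] [NormedSpace ℝ E] [CompleteSpace E]
    [TopologicalSpace.SeparableSpace E]
    {T L : ℝ} (hT : 0 < T) (hL : 0 ≤ L) (x : E)
    (S : ℝ → E →L[ℝ] E) (Φ : ℝ → E → E) (w : ℝ → E)
    (hS0 : S 0 = ContinuousLinearMap.id ℝ E)
    (hS1 : ∀ t ∈ Set.Icc (0 : ℝ) T, ‖S t‖ ≤ 1)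
    (hScont : ∀ v : E, ContinuousOn (fun t => S t v) (Set.Icc 0 T))
    (hΦmeas : ∀ v : E, StronglyMeasurable (fun t => Φ t v))
    (hΦlip : ∀ t ∈ Set.Icc (0 : ℝ) T, ∀ a b : E, ‖Φ t a - Φ t b‖ ≤ L * ‖a - b‖)
    (hΦint : ∃ y₀ : E,
      ∫⁻ t in Set.Icc (0 : ℝ) T, ENNReal.ofReal (‖Φ t y₀‖ ^ 2) < ⊤)
    (hw : ContinuousOn w (Set.Icc 0 T)) :
    ∃ y : ℝ → E,
      (ContinuousOn y (Set.Icc 0 T) ∧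
        ∀ t ∈ Set.Icc (0 : ℝ) T,
          IntegrableOn (fun s => S (t - s) (Φ s (y s))) (Set.Icc 0 t) volume ∧
          y t = S t x + (∫ s in Set.Icc (0 : ℝ) t, S (t - s) (Φ s (y s))) + w t) ∧
      ∀ z : ℝ → E,
        (ContinuousOn z (Set.Icc 0 T) ∧
          ∀ t ∈ Set.Icc (0 : ℝ) T,
            IntegrableOn (fun s => S (t - s) (Φ s (z s))) (Set.Icc 0 t) volume ∧
            z t = S t x + (∫ s in Set.Icc (0 : ℝ) t, S (t - s) (Φ s (z s))) + w t) →
        ∀ t ∈ Set.Icc (0 : ℝ) T, z t = y t := by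
  obtain ⟨y₀, hy₀⟩ := hΦint
  have hΦL : ∀ᵐ t ∂volume.restrict (Icc 0 T), LipschitzWith (.mk L hL) (Φ t) := by
    filter_upwards [ae_restrict_mem measurableSet_Icc] with t ht
    exact .of_dist_le_mul (by simpa only [dist_eq_norm, NNReal.coe_mk] using hΦlip t ht)
  have hΦy₀ : IntegrableOn (fun t => Φ t y₀) (Icc 0 T) :=
    integrable_of_lintegral_norm_sq_lt_top (hΦmeas y₀).aestronglyMeasurable hy₀
  simpa only [IsMildSolution, operatorConvolution, Pi.add_apply, EqOn,
    add_right_comm _ _ (w _)] using stmt_13_general hT.le hScont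
      (fun v => (hΦmeas v).aestronglyMeasurable) hΦL hΦy₀ ((hScont x).add hw)
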